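/- Fix an integer n ≥ 1. Let Ω ∈ τ_s(ℍ_s^n) be self-stem-preserving. Then (𝒫𝒮(Ω), +, *) is an associative unitary real algebra; explicitly, for all path-slice f, g, h : Ω → ℍ and a ∈ ℝ: (i) f + g and f*g are path-slice; (ii) (f*g)*h = f*(g*h); (iii) the constant function 1 satisfies 1*f = f*1 = f; (iv) f*(g + h) = f*g + f*h and (f + g)*h = f*h + g*h; (v) (a·f)*g = a·(f*g) = f*(a·g). -/

import Mathlib

open scoped ENNReal NNReal

noncomputable section

/-- The real quaternions. -/
abbrev ℍ := Quaternion ℝ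

/-- The set `𝕊` of imaginary units of the quaternions. -/
def QS : Set ℍ := {I | I ^ 2 = -1}

/-- `Ψ_i^I : ℂ^n → ℂ_I^n ⊆ ℍ^n`, sending `x + y i` to `x + y I` componentwise. -/
def PsiI (n : ℕ) (I : ℍ) (z : Fin n → ℂ) : Fin n → ℍ :=
  fun ℓ => algebraMap ℝ ℍ (z ℓ).re + (z ℓ).im • I

/-- The slice `ℂ_I^n = (ℝ + ℝ I)^n ⊆ ℍ^n`. -/
def sliceCn (n : ℕ) (I : ℍ) : Set (Fin n → ℍ) := Set.range (PsiI n I)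

/-- The weakly slice cone `ℍ_s^n = ⋃_{I ∈ 𝕊} ℂ_I^n`. -/
def weakSliceCone (n : ℕ) : Set (Fin n → ℍ) := ⋃ I ∈ QS, sliceCn n I

/-- `Ω` is slice open (i.e. `Ω ∈ τ_s(ℍ_s^n)`): `Ω ⊆ ℍ_s^n` and each slice
`Ω_I = Ω ∩ ℂ_I^n` is open in `ℂ_I^n`, encoded via the homeomorphism `Ψ_i^I`. -/
def sliceOpen (n : ℕ) (Ω : Set (Fin n → ℍ)) : Prop :=
  Ω ⊆ weakSliceCone n ∧ ∀ I ∈ QS, IsOpen (PsiI n I ⁻¹' Ω)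

/-- The set `𝒫(ℂ^n)` of continuous paths `[0,1] → ℂ^n` with real start point,
encoded as functions `ℝ → ℂ^n` continuous on `[0,1]`. -/
def PathsC (n : ℕ) : Set (ℝ → Fin n → ℂ) :=
  {γ | ContinuousOn γ (Set.Icc 0 1) ∧ ∀ ℓ, (γ 0 ℓ).im = 0}

/-- `γ^I([0,1]) ⊆ Ω`. -/
def pathInSlice (n : ℕ) (Ω : Set (Fin n → ℍ)) (I : ℍ) (γ : ℝ → Fin n → ℂ) : Prop :=
  ∀ t ∈ Set.Icc (0 : ℝ) 1, PsiI n I (γ t) ∈ Ω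

/-- The set `𝕊(Ω, γ) = {I ∈ 𝕊 : γ^I ⊆ Ω}`. -/
def sliceUnits (n : ℕ) (Ω : Set (Fin n → ℍ)) (γ : ℝ → Fin n → ℂ) : Set ℍ :=
  {I | I ∈ QS ∧ pathInSlice n Ω I γ}

/-- The set `𝒫(ℂ^n, Ω)`. -/
def PathsIn (n : ℕ) (Ω : Set (Fin n → ℍ)) : Set (ℝ → Fin n → ℂ) :=
  {γ | γ ∈ PathsC n ∧ ∃ I, I ∈ sliceUnits n Ω γ}

/-- The straight segment `𝓛_z^w(t) = (1 - t)z + tw`. -/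
def segPath (n : ℕ) (z w : Fin n → ℂ) : ℝ → Fin n → ℂ :=
  fun t => (1 - t) • z + t • w

/-- Concatenation of paths. -/
def concatP (n : ℕ) (γ δ : ℝ → Fin n → ℂ) : ℝ → Fin n → ℂ :=
  fun t => if t ≤ 1 / 2 then γ (2 * t) else δ (2 * t - 1)

/-- `𝓛_γ(z) := γ ∘ 𝓛_{γ(1)}^z`, the extension of `γ` by the segment from `γ(1)` to `z`. -/
def extendPath (n : ℕ) (γ : ℝ → Fin n → ℂ) (z : Fin n → ℂ) : ℝ → Fin n → ℂ :=
  concatP n γ (segPath n (γ 1) z)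

/-- The ball `B_{𝒫(ℂ^n)}(γ, r)` in path space. -/
def pathBall (n : ℕ) (γ : ℝ → Fin n → ℂ) (r : ℝ) : Set (ℝ → Fin n → ℂ) :=
  {β | ∃ z ∈ Metric.ball (γ 1) r, β = extendPath n γ z}

/-- `B_I(c^I, r) ⊆ Ω_I`, encoded via `Ψ_i^I`. -/
def ballInSlice (n : ℕ) (Ω : Set (Fin n → ℍ)) (I : ℍ) (c : Fin n → ℂ) (r : ℝ) : Prop :=
  ∀ w ∈ Metric.ball c r, PsiI n I w ∈ Ω

/-- `r_{γ,Ω}`, as an extended nonnegative real. -/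
def rPath (n : ℕ) (Ω : Set (Fin n → ℍ)) (γ : ℝ → Fin n → ℂ) : ℝ≥0∞ :=
  sSup {x : ℝ≥0∞ | ∃ r : ℝ≥0, x = r ∧ pathBall n γ r ⊆ PathsIn n Ω}

/-- `r^{𝕊'}_{γ,Ω}`, as an extended nonnegative real. -/
def rSliceSet (n : ℕ) (Ω : Set (Fin n → ℍ)) (γ : ℝ → Fin n → ℂ) (S' : Set ℍ) : ℝ≥0∞ :=
  sSup {x : ℝ≥0∞ | ∃ r : ℝ≥0, x = r ∧ ∀ I ∈ S', ballInSlice n Ω I (γ 1) r}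

/-- `r²_{γ,Ω}`, as an extended nonnegative real. -/
def r2Slice (n : ℕ) (Ω : Set (Fin n → ℍ)) (γ : ℝ → Fin n → ℂ) : ℝ≥0∞ :=
  sSup {x : ℝ≥0∞ | ∃ S'' : Set ℍ, S'' ⊆ sliceUnits n Ω γ ∧ S''.Nontrivial ∧ x = rSliceSet n Ω γ S''}

/-- `r^I_{γ,Ω}`, as an extended nonnegative real. -/
def rISlice (n : ℕ) (Ω : Set (Fin n → ℍ)) (γ : ℝ → Fin n → ℂ) (I : ℍ) : ℝ≥0∞ :=
  sSup {x : ℝ≥0∞ | ∃ r : ℝ≥0, x = r ∧ ballInSlice n Ω I (γ 1) r}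

/-- `Ω` is real-path-connected. -/
def realPathConnected (n : ℕ) (Ω : Set (Fin n → ℍ)) : Prop :=
  ∀ q ∈ Ω, ∃ γ ∈ PathsIn n Ω, ∃ I ∈ sliceUnits n Ω γ, PsiI n I (γ 1) = q

/-- `Ω₂` is `Ω₁`-stem-preserving. -/
def stemPreserving (n : ℕ) (Ω₁ Ω₂ : Set (Fin n → ℍ)) : Prop :=
  (∀ γ ∈ PathsIn n Ω₁, (sliceUnits n Ω₂ γ).Nontrivial) ∧
  (∀ α ∈ PathsIn n Ω₁, ∀ β ∈ PathsIn n Ω₁, α 1 = β 1 →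
    ¬ ∃ I, sliceUnits n Ω₂ α ∩ sliceUnits n Ω₂ β = {I})

/-- `F : 𝒫(ℂ^n, Ω) → ℍ^{2×1}` is a (path-slice) stem function of `f`:
`f(γ^I(1)) = (1, I)·F(γ)`. -/
def isStemOf (n : ℕ) (Ω : Set (Fin n → ℍ)) (f : (Fin n → ℍ) → ℍ)
    (F : (ℝ → Fin n → ℂ) → ℍ × ℍ) : Prop :=
  ∀ γ ∈ PathsIn n Ω, ∀ I ∈ sliceUnits n Ω γ, f (PsiI n I (γ 1)) = (F γ).1 + I * (F γ).2

/-- `f` is a path-slice function on `Ω`. -/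
def PathSliceFn (n : ℕ) (Ω : Set (Fin n → ℍ)) (f : (Fin n → ℍ) → ℍ) : Prop :=
  ∃ F, isStemOf n Ω f F

/-- `f` is (weakly) slice regular on `Ω`: each restriction `f_I` is real differentiable
and satisfies the Cauchy-Riemann equations `(∂/∂x_ℓ + I ∂/∂y_ℓ) f_I = 0`. -/
def SliceRegular (n : ℕ) (Ω : Set (Fin n → ℍ)) (f : (Fin n → ℍ) → ℍ) : Prop :=
  ∀ I ∈ QS,
    DifferentiableOn ℝ (fun z => f (PsiI n I z)) (PsiI n I ⁻¹' Ω) ∧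
    ∀ z ∈ PsiI n I ⁻¹' Ω, ∀ ℓ : Fin n,
      fderivWithin ℝ (fun z => f (PsiI n I z)) (PsiI n I ⁻¹' Ω) z (Pi.single ℓ 1)
        + I * fderivWithin ℝ (fun z => f (PsiI n I z)) (PsiI n I ⁻¹' Ω) z
            (Pi.single ℓ Complex.I) = 0

open Classical in
/-- `F_{Ω₁}^f` : a choice of stem function of the path-slice function `f : Ω₂ → ℍ`
(its restriction to `𝒫(ℂ^n, Ω₁)` is independent of the choice). -/
def stemF (n : ℕ) (Ω₂ : Set (Fin n → ℍ)) (f : (Fin n → ℍ) → ℍ) :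
    (ℝ → Fin n → ℂ) → ℍ × ℍ :=
  if h : ∃ F, isStemOf n Ω₂ f F then h.choose else fun _ => 0

open Classical in
/-- The map `ℑ : ℍ_s^n → 𝕊 ∪ {0}`. -/
def scrI {n : ℕ} (q : Fin n → ℍ) : ℍ :=
  if h : (Finset.univ.filter fun ℓ : Fin n => Quaternion.im (q ℓ) ≠ 0).Nonempty then
    ‖Quaternion.im (q ((Finset.univ.filter
        fun ℓ : Fin n => Quaternion.im (q ℓ) ≠ 0).min' h))‖⁻¹ •
      Quaternion.im (q ((Finset.univ.filter
        fun ℓ : Fin n => Quaternion.im (q ℓ) ≠ 0).min' h))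
  else 0

open Classical in
/-- The map `ℱ_{Ω₁}^g : Ω₁ → ℍ^{2×1}`. -/
def scrF (n : ℕ) (Ω₁ Ω₂ : Set (Fin n → ℍ)) (g : (Fin n → ℍ) → ℍ) (q : Fin n → ℍ) :
    ℍ × ℍ :=
  if h : (∃ ℓ, Quaternion.im (q ℓ) ≠ 0) ∧
      ∃ γ, γ ∈ PathsIn n Ω₁ ∧ pathInSlice n Ω₁ (scrI q) γ ∧ PsiI n (scrI q) (γ 1) = q then
    stemF n Ω₂ g h.2.choose
  else (g q, 0)

/-- The `*`-product `(f*g)(q) = (f(q), ℑ(q)f(q))·ℱ_{Ω₁}^g(q)`. -/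
def starProd (n : ℕ) (Ω₁ Ω₂ : Set (Fin n → ℍ)) (f g : (Fin n → ℍ) → ℍ) :
    (Fin n → ℍ) → ℍ :=
  fun q => f q * (scrF n Ω₁ Ω₂ g q).1 + scrI q * f q * (scrF n Ω₁ Ω₂ g q).2

/-- Componentwise complex conjugate of a path. -/
def conjPath (n : ℕ) (γ : ℝ → Fin n → ℂ) : ℝ → Fin n → ℂ :=
  fun t ℓ => starRingEnd ℂ (γ t ℓ)

end

lemma QS_sq {I : ℍ} (hI : I ∈ QS) : I * I = -1 := by
  have h : I ^ 2 = -1 := hI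
  rw [← sq, h]

lemma QS_neg {I : ℍ} (hI : I ∈ QS) : -I ∈ QS := by
  have h : I ^ 2 = -1 := hI
  show (-I) ^ 2 = -1
  rw [neg_sq, h]

lemma QS_norm {I : ℍ} (hI : I ∈ QS) : ‖I‖ = 1 := by
  have h := congrArg norm (QS_sq hI)
  rw [norm_mul, norm_neg, norm_one] at h
  nlinarith [norm_nonneg I]

lemma QS_re {I : ℍ} (hI : I ∈ QS) : I.re = 0 := by
  have h := QS_sq hI
  have h0 := congrArg (fun q : ℍ => q.re) h
  have h1 := congrArg (fun q : ℍ => q.imI) h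
  have h2 := congrArg (fun q : ℍ => q.imJ) h
  have h3 := congrArg (fun q : ℍ => q.imK) h
  simp at h0 h1 h2 h3
  have k0 : QuaternionAlgebra.re (1 : ℍ) = 1 := rfl
  have k1 : QuaternionAlgebra.imI (1 : ℍ) = 0 := rfl
  have k2 : QuaternionAlgebra.imJ (1 : ℍ) = 0 := rfl
  have k3 : QuaternionAlgebra.imK (1 : ℍ) = 0 := rfl
  rw [k0] at h0
  rw [k1] at h1
  rw [k2] at h2
  rw [k3] at h3
  by_contra hr
  have e1 : I.imI = 0 := mul_left_cancel₀ hr (by linarith)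
  have e2 : I.imJ = 0 := mul_left_cancel₀ hr (by linarith)
  have e3 : I.imK = 0 := mul_left_cancel₀ hr (by linarith)
  rw [e1, e2, e3] at h0
  nlinarith [sq_nonneg I.re]

lemma PsiI_im (n : ℕ) {I : ℍ} (hI : I ∈ QS) (z : Fin n → ℂ) (ℓ : Fin n) :
    Quaternion.im (PsiI n I z ℓ) = (z ℓ).im • I := by
  have := QS_re hI
  ext <;> simp [PsiI, this, Quaternion.algebraMap_def]

lemma PsiI_re (n : ℕ) {I : ℍ} (hI : I ∈ QS) (z : Fin n → ℂ) (ℓ : Fin n) :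
    (PsiI n I z ℓ).re = (z ℓ).re := by
  have := QS_re hI
  simp [PsiI, this, Quaternion.algebraMap_def]

lemma QS_ne {I : ℍ} (hI : I ∈ QS) : I ≠ 0 := by
  intro h
  have := QS_norm hI
  simp [h] at this

lemma PsiI_inj (n : ℕ) {I : ℍ} (hI : I ∈ QS) {z w : Fin n → ℂ}
    (h : PsiI n I z = PsiI n I w) : z = w := by
  funext ℓ
  apply Complex.ext
  · rw [← PsiI_re n hI z, h, PsiI_re n hI]
  · have := PsiI_im n hI z ℓ
    rw [h, PsiI_im n hI w ℓ] at this
    exact (smul_left_injective ℝ (QS_ne hI) this).symm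

lemma scrI_PsiI (n : ℕ) {I : ℍ} (hI : I ∈ QS) (z : Fin n → ℂ)
    (hq : ∃ ℓ, Quaternion.im (PsiI n I z ℓ) ≠ 0) :
    scrI (PsiI n I z) = I ∨ scrI (PsiI n I z) = -I := by
  classical
  have hne : (Finset.univ.filter
      fun ℓ : Fin n => Quaternion.im (PsiI n I z ℓ) ≠ 0).Nonempty := by
    obtain ⟨ℓ, hℓ⟩ := hq
    exact ⟨ℓ, by simpa using hℓ⟩
  unfold scrI
  rw [dif_pos (by convert hne)]
  generalize hm : Finset.min' (α := Fin n) _ _ = m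
  have hmem := Finset.min'_mem _ hne
  have hm' : Quaternion.im (PsiI n I z m) ≠ 0 := by
    rw [← hm]
    have := (Finset.mem_filter.1 hmem).2
    convert this
  rw [PsiI_im n hI] at hm' ⊢
  have hy : (z m).im ≠ 0 := fun h0 => hm' (by rw [h0, zero_smul])
  rw [norm_smul, QS_norm hI, mul_one, smul_smul, Real.norm_eq_abs]
  rcases abs_cases (z m).im with ⟨h1, _⟩ | ⟨h1, _⟩
  · left; rw [h1, inv_mul_cancel₀ hy, one_smul]
  · right; rw [h1, inv_neg, neg_mul, inv_mul_cancel₀ hy, neg_one_smul]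

lemma scrI_real (n : ℕ) (q : Fin n → ℍ) (hq : ¬ ∃ ℓ, Quaternion.im (q ℓ) ≠ 0) :
    scrI q = 0 := by
  classical
  unfold scrI
  rw [dif_neg]
  rintro ⟨ℓ, hℓ⟩
  exact hq ⟨ℓ, (Finset.mem_filter.1 hℓ).2⟩

lemma two_units {I J : ℍ} (hIJ : I ≠ J) {a b c d : ℍ}
    (h1 : a + I * b = c + I * d) (h2 : a + J * b = c + J * d) : a = c ∧ b = d := by
  have h3 : (I - J) * (b - d) = 0 := by
    have e : (I - J) * (b - d) = (a + I * b) - (a + J * b) - ((c + I * d) - (c + J * d)) := by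
      noncomm_ring
    rw [e, h1, h2]; simp
  have hbd : b = d := by
    rcases mul_eq_zero.1 h3 with h | h
    · exact absurd (sub_eq_zero.1 h) hIJ
    · exact sub_eq_zero.1 h
  subst hbd
  exact ⟨add_right_cancel h1, rfl⟩

lemma stem_end {n : ℕ} {Ω : Set (Fin n → ℍ)} (hsp : stemPreserving n Ω Ω)
    {g : (Fin n → ℍ) → ℍ} {G G' : (ℝ → Fin n → ℂ) → ℍ × ℍ}
    (hG : isStemOf n Ω g G) (hG' : isStemOf n Ω g G')
    {α β : ℝ → Fin n → ℂ} (hα : α ∈ PathsIn n Ω) (hβ : β ∈ PathsIn n Ω) (h1 : α 1 = β 1)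
    {I : ℍ} (hIα : I ∈ sliceUnits n Ω α) (hIβ : I ∈ sliceUnits n Ω β) :
    (G α).1 = (G' β).1 ∧ (G α).2 = (G' β).2 := by
  have hns := hsp.2 α hα β hβ h1
  have : ∃ J ∈ sliceUnits n Ω α ∩ sliceUnits n Ω β, J ≠ I := by
    by_contra hc
    push Not at hc
    exact hns ⟨I, Set.eq_singleton_iff_unique_mem.2 ⟨⟨hIα, hIβ⟩, hc⟩⟩
  obtain ⟨J, ⟨hJα, hJβ⟩, hJI⟩ := this
  refine two_units hJI.symm ?_ ?_
  · rw [← hG α hα I hIα, ← hG' β hβ I hIβ, h1]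
  · rw [← hG α hα J hJα, ← hG' β hβ J hJβ, h1]

lemma PsiI_conj (n : ℕ) (I : ℍ) (γ : ℝ → Fin n → ℂ) (t : ℝ) :
    PsiI n I (conjPath n γ t) = PsiI n (-I) (γ t) := by
  funext ℓ
  simp [PsiI, conjPath]

lemma conj_units {n : ℕ} {Ω : Set (Fin n → ℍ)} {γ : ℝ → Fin n → ℂ} {I : ℍ}
    (hI : -I ∈ sliceUnits n Ω γ) : I ∈ sliceUnits n Ω (conjPath n γ) := by
  refine ⟨by simpa using QS_neg hI.1, fun t ht => ?_⟩
  rw [PsiI_conj]; exact hI.2 t ht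

lemma conj_mem {n : ℕ} {Ω : Set (Fin n → ℍ)} {γ : ℝ → Fin n → ℂ}
    (hγ : γ ∈ PathsIn n Ω) : conjPath n γ ∈ PathsIn n Ω := by
  obtain ⟨⟨hc, h0⟩, I, hI⟩ := hγ
  refine ⟨⟨?_, fun ℓ => by simp [conjPath, h0]⟩, -I, conj_units (by simpa using hI)⟩
  rw [continuousOn_pi] at hc ⊢
  intro ℓ
  exact Complex.continuous_conj.comp_continuousOn (hc ℓ)

lemma stem_conj {n : ℕ} {Ω : Set (Fin n → ℍ)} (hsp : stemPreserving n Ω Ω)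
    {g : (Fin n → ℍ) → ℍ} {G : (ℝ → Fin n → ℂ) → ℍ × ℍ}
    (hG : isStemOf n Ω g G) {β : ℝ → Fin n → ℂ} (hβ : β ∈ PathsIn n Ω) :
    (G β).1 = (G (conjPath n β)).1 ∧ (G β).2 = -(G (conjPath n β)).2 := by
  have key : ∀ I ∈ sliceUnits n Ω β,
      (G β).1 + I * (G β).2 = (G (conjPath n β)).1 + I * -(G (conjPath n β)).2 := by
    intro I hI
    have := hG _ (conj_mem hβ) (-I) (conj_units (by simpa using hI))
    rw [PsiI_conj, neg_neg, hG β hβ I hI] at this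
    rw [this]; simp
  obtain ⟨I, hI, J, hJ, hIJ⟩ := hsp.1 β hβ
  exact two_units hIJ (key I hI) (key J hJ)

lemma stemF_spec {n : ℕ} {Ω : Set (Fin n → ℍ)} {g : (Fin n → ℍ) → ℍ}
    (hg : PathSliceFn n Ω g) : isStemOf n Ω g (stemF n Ω g) := by
  unfold stemF
  unfold PathSliceFn at hg
  rw [dif_pos hg]
  exact Exists.choose_spec hg

lemma star_eq {n : ℕ} {Ω : Set (Fin n → ℍ)} (hsp : stemPreserving n Ω Ω)
    (f : (Fin n → ℍ) → ℍ) {g : (Fin n → ℍ) → ℍ} {G : (ℝ → Fin n → ℂ) → ℍ × ℍ}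
    (hG : isStemOf n Ω g G) {γ : ℝ → Fin n → ℂ} (hγ : γ ∈ PathsIn n Ω)
    {I : ℍ} (hI : I ∈ sliceUnits n Ω γ) :
    starProd n Ω Ω f g (PsiI n I (γ 1)) =
      f (PsiI n I (γ 1)) * (G γ).1 + I * f (PsiI n I (γ 1)) * (G γ).2 := by
  have hS := stemF_spec ⟨G, hG⟩
  by_cases hq : ∃ ℓ, Quaternion.im (PsiI n I (γ 1) ℓ) ≠ 0
  · have hsc := scrI_PsiI n hI.1 (γ 1) hq
    have hex : ∃ β, β ∈ PathsIn n Ω ∧ pathInSlice n Ω (scrI (PsiI n I (γ 1))) β ∧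
        PsiI n (scrI (PsiI n I (γ 1))) (β 1) = PsiI n I (γ 1) := by
      rcases hsc with h | h
      · exact ⟨γ, hγ, by rw [h]; exact hI.2, by rw [h]⟩
      · refine ⟨conjPath n γ, conj_mem hγ, ?_, ?_⟩
        · rw [h]; exact (conj_units (by simpa using hI)).2
        · rw [h, PsiI_conj, neg_neg]
    unfold starProd scrF
    rw [dif_pos ⟨hq, hex⟩]
    generalize hβ : Exists.choose _ = β
    have hb := hex.choose_spec
    rw [hβ] at hb
    obtain ⟨b1, b2, b3⟩ := hb
    rcases hsc with h | h
    · rw [h] at b2 b3 ⊢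
      obtain ⟨e1, e2⟩ := stem_end hsp hS hG b1 hγ (PsiI_inj n hI.1 b3) ⟨hI.1, b2⟩ hI
      rw [e1, e2]
    · rw [h] at b2 b3 ⊢
      obtain ⟨c1, c2⟩ := stem_conj hsp hS b1
      rw [← PsiI_conj] at b3
      obtain ⟨e1, e2⟩ := stem_end hsp hS hG (conj_mem b1) hγ (PsiI_inj n hI.1 b3)
        (conj_units ⟨QS_neg hI.1, b2⟩) hI
      rw [c1, c2, e1, e2]; simp
  · unfold starProd scrF
    rw [dif_neg (fun h => hq h.1), scrI_real n _ hq]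
    obtain ⟨J, hJ, hJI⟩ := (hsp.1 γ hγ).exists_ne I
    have hz : ∀ ℓ, (γ 1 ℓ).im = 0 := by
      intro ℓ
      by_contra h0
      exact hq ⟨ℓ, by rw [PsiI_im n hI.1]; exact smul_ne_zero h0 (QS_ne hI.1)⟩
    have hJq : PsiI n J (γ 1) = PsiI n I (γ 1) := by
      funext ℓ; simp [PsiI, hz]
    have h1 := hG γ hγ I hI
    have h2 := hG γ hγ J hJ
    rw [hJq] at h2
    obtain ⟨e1, e2⟩ := two_units (a := (G γ).1) (b := (G γ).2)
      (c := g (PsiI n I (γ 1))) (d := 0) hJI.symm (by rw [← h1]; simp) (by rw [← h2]; simp)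
    rw [e1, e2]; simp

lemma stem_add {n : ℕ} {Ω : Set (Fin n → ℍ)} {f g : (Fin n → ℍ) → ℍ}
    {F G : (ℝ → Fin n → ℂ) → ℍ × ℍ} (hF : isStemOf n Ω f F) (hG : isStemOf n Ω g G) :
    isStemOf n Ω (fun q => f q + g q)
      (fun γ => ((F γ).1 + (G γ).1, (F γ).2 + (G γ).2)) := by
  intro γ hγ I hI
  show f _ + g _ = _
  rw [hF γ hγ I hI, hG γ hγ I hI]
  noncomm_ring

lemma stem_smul {n : ℕ} {Ω : Set (Fin n → ℍ)} {f : (Fin n → ℍ) → ℍ}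
    {F : (ℝ → Fin n → ℂ) → ℍ × ℍ} (hF : isStemOf n Ω f F) (a : ℝ) :
    isStemOf n Ω (fun q => a • f q) (fun γ => (a • (F γ).1, a • (F γ).2)) := by
  intro γ hγ I hI
  show a • f _ = _
  rw [hF γ hγ I hI]
  simp only [mul_smul_comm, smul_add]

lemma stem_one {n : ℕ} {Ω : Set (Fin n → ℍ)} :
    isStemOf n Ω (fun _ => 1) (fun _ => (1, 0)) := by
  intro γ _ I _
  simp

lemma mul_aux {I : ℍ} (hI : I * I = -1) (a b c d : ℍ) :
    (a + I * b) * c + I * (a + I * b) * d = (a * c - b * d) + I * (a * d + b * c) := by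
  have : I * (I * b) * d = -(b * d) := by
    rw [← mul_assoc I I b, hI]; noncomm_ring
  rw [mul_add I, add_mul (I * a), this]
  noncomm_ring

lemma stem_star {n : ℕ} {Ω : Set (Fin n → ℍ)} (hsp : stemPreserving n Ω Ω)
    {f g : (Fin n → ℍ) → ℍ}
    {F G : (ℝ → Fin n → ℂ) → ℍ × ℍ} (hF : isStemOf n Ω f F) (hG : isStemOf n Ω g G) :
    isStemOf n Ω (starProd n Ω Ω f g)
      (fun γ => ((F γ).1 * (G γ).1 - (F γ).2 * (G γ).2,
        (F γ).1 * (G γ).2 + (F γ).2 * (G γ).1)) := by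
  intro γ hγ I hI
  rw [star_eq hsp f hG hγ hI, hF γ hγ I hI]
  exact mul_aux (QS_sq hI.1) _ _ _ _

theorem statement9 (n : ℕ) (hn : 1 ≤ n) (Ω : Set (Fin n → ℍ)) (hΩ : sliceOpen n Ω)
    (hrc : realPathConnected n Ω) (hsp : stemPreserving n Ω Ω)
    (f g h : (Fin n → ℍ) → ℍ)
    (hf : PathSliceFn n Ω f) (hg : PathSliceFn n Ω g) (hh : PathSliceFn n Ω h)
    (a : ℝ) :
    PathSliceFn n Ω (fun q => f q + g q) ∧
    PathSliceFn n Ω (starProd n Ω Ω f g) ∧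
    (∀ q ∈ Ω, starProd n Ω Ω (starProd n Ω Ω f g) h q
        = starProd n Ω Ω f (starProd n Ω Ω g h) q) ∧
    (∀ q ∈ Ω, starProd n Ω Ω (fun _ => 1) f q = f q) ∧
    (∀ q ∈ Ω, starProd n Ω Ω f (fun _ => 1) q = f q) ∧
    (∀ q ∈ Ω, starProd n Ω Ω f (fun p => g p + h p) q
        = starProd n Ω Ω f g q + starProd n Ω Ω f h q) ∧
    (∀ q ∈ Ω, starProd n Ω Ω (fun p => f p + g p) h q
        = starProd n Ω Ω f h q + starProd n Ω Ω g h q) ∧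
    (∀ q ∈ Ω, starProd n Ω Ω (fun p => a • f p) g q = a • starProd n Ω Ω f g q) ∧
    (∀ q ∈ Ω, starProd n Ω Ω f (fun p => a • g p) q = a • starProd n Ω Ω f g q) := by
  obtain ⟨F, hF⟩ := hf
  obtain ⟨G, hG⟩ := hg
  obtain ⟨H, hH⟩ := hh
  refine ⟨⟨_, stem_add hF hG⟩, ⟨_, stem_star hsp hF hG⟩, ?_, ?_, ?_, ?_, ?_, ?_, ?_⟩ <;>
    intro q hq <;> obtain ⟨γ, hγ, I, hI, rfl⟩ := hrc q hq
  · rw [stem_star hsp (stem_star hsp hF hG) hH γ hγ I hI,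
      stem_star hsp hF (stem_star hsp hG hH) γ hγ I hI]
    noncomm_ring
  · rw [star_eq hsp _ hF hγ hI, hF γ hγ I hI]
    simp
  · rw [star_eq hsp _ stem_one hγ hI]
    simp
  · rw [star_eq hsp _ (stem_add hG hH) hγ hI, star_eq hsp _ hG hγ hI, star_eq hsp _ hH hγ hI]
    noncomm_ring
  · rw [star_eq hsp _ hH hγ hI, star_eq hsp _ hH hγ hI, star_eq hsp _ hH hγ hI]
    noncomm_ring
  · rw [star_eq hsp _ hG hγ hI, star_eq hsp _ hG hγ hI]
    simp only [mul_smul_comm, smul_mul_assoc, smul_add]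
  · rw [star_eq hsp _ (stem_smul hG a) hγ hI, star_eq hsp _ hG hγ hI]
    simp only [mul_smul_comm, smul_add]
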